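/- Let N ≥ 1, and let (u, v) be a classical solution of the system (P_Λ) with Λ = 3 and u > 0, v > 0 at every point of ℝ^N. Then ∂_N u > 0 at every point of ℝ^N if and only if ∂_N v < 0 at every point of ℝ^N. -/

import Mathlib

/-!
For `Λ = 3` the coupling terms complete the cube: `w = u + v` solves `Δw = w³ - w`. A positive
entire solution of this equation is identically `1`, so `v = 1 - u` and the derivatives of `u` and
`v` are opposite.

No growth of `w` is assumed, so `w` is estimated at the centre `x` of a ball of radius `R`, with
the weight `η = R² - |· - x|²`. Where `η w` is maximal, a multiple of `η⁻¹` touches `w` from above;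
where `η² / w` is maximal, a multiple of `η²` touches `w` from below. Comparing Laplacians at these
two points gives `|w(x)² - 1| = O(R⁻²)`, and `R → ∞` finishes the proof.
-/

open scoped RealInnerProductSpace
open Filter

noncomputable section

/-- The Laplacian of `f : ℝ^N → ℝ`, as the sum of the pure second partial
derivatives in the coordinate directions. -/
def lap (N : ℕ) (f : EuclideanSpace ℝ (Fin N) → ℝ) (x : EuclideanSpace ℝ (Fin N)) : ℝ :=
  ∑ i : Fin N,
    fderiv ℝ (fun y => fderiv ℝ f y (EuclideanSpace.single i 1)) x (EuclideanSpace.single i 1)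

/-- `(u, v)` is a classical solution of the system `(P_Λ)` on `ℝ^N`:
`u, v` are `C²` and `-Δu = u - u³ - Λ u v²`, `-Δv = v - v³ - Λ u² v` pointwise. -/
def IsSolution (N : ℕ) (Λ : ℝ) (u v : EuclideanSpace ℝ (Fin N) → ℝ) : Prop :=
  ContDiff ℝ 2 u ∧ ContDiff ℝ 2 v ∧
  (∀ x, -lap N u x = u x - (u x) ^ 3 - Λ * u x * (v x) ^ 2) ∧
  (∀ x, -lap N v x = v x - (v x) ^ 3 - Λ * (u x) ^ 2 * v x)

/-- Condition `(h∞)`: `u → 1`, `v → 0` as `x_N → +∞` and `u → 0`, `v → 1` as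
`x_N → -∞`, uniformly with respect to `x' ∈ ℝ^{N-1}` (the dimension is `N + 1`). -/
def Hinf (N : ℕ) (u v : EuclideanSpace ℝ (Fin (N + 1)) → ℝ) : Prop :=
  (∀ ε : ℝ, 0 < ε → ∃ M : ℝ, ∀ x : EuclideanSpace ℝ (Fin (N + 1)),
    M ≤ x (Fin.last N) → |u x - 1| < ε ∧ |v x| < ε) ∧
  (∀ ε : ℝ, 0 < ε → ∃ M : ℝ, ∀ x : EuclideanSpace ℝ (Fin (N + 1)),
    x (Fin.last N) ≤ M → |u x| < ε ∧ |v x - 1| < ε)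

open Topology Laplacian InnerProductSpace Metric Module Gradient

section SecondDerivative

lemma iteratedDeriv_two_nonpos_of_isLocalMax {f : ℝ → ℝ} {t : ℝ} (hf : ContinuousAt f t)
    (hmax : IsLocalMax f t) : iteratedDeriv 2 f t ≤ 0 := by
  rw [iteratedDeriv_succ, iteratedDeriv_one]
  by_contra! hpos
  have hmin : IsLocalMin f t := isLocalMin_of_deriv_deriv_pos hpos hmax.deriv_eq_zero hf
  have hconst : f =ᶠ[𝓝 t] fun _ ↦ f t := by
    filter_upwards [hmax, hmin] with s h₁ h₂ using le_antisymm h₁ h₂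
  simp [hconst.deriv.deriv_eq] at hpos

variable {E F : Type*} [NormedAddCommGroup E] [NormedSpace ℝ E]
  [NormedAddCommGroup F] [NormedSpace ℝ F]

lemma iteratedDeriv_two_comp_add_smul {f : E → F} {x : E} (hf : ContDiffAt ℝ 2 f x) (v : E) :
    iteratedDeriv 2 (fun t : ℝ ↦ f (x + t • v)) 0 = iteratedFDeriv ℝ 2 f x ![v, v] := by
  have hderiv : deriv (fun t : ℝ ↦ x + t • v) = fun _ ↦ v := by
    funext t
    simpa using (((hasDerivAt_id t).smul_const v).const_add x).deriv
  have hderiv₂ : iteratedDeriv 2 (fun t : ℝ ↦ x + t • v) 0 = 0 := by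
    simp [iteratedDeriv_succ, hderiv]
  have hcomp := iteratedDeriv_vcomp_two (g := f) (f := fun t : ℝ ↦ x + t • v) (x := 0)
    (by simpa using hf) (by fun_prop)
  rw [hderiv₂, hderiv, map_zero, add_zero] at hcomp
  have hv : (fun _ ↦ v) = ![v, v] := by
    ext i
    fin_cases i <;> rfl
  simpa [Function.comp_def, hv] using hcomp

lemma iteratedFDeriv_two_comp {φ : ℝ → ℝ} {h : E → ℝ} {x : E} (hφ : ContDiffAt ℝ 2 φ (h x))
    (hh : ContDiffAt ℝ 2 h x) (v : E) :
    iteratedFDeriv ℝ 2 (φ ∘ h) x ![v, v] =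
      iteratedDeriv 2 φ (h x) * fderiv ℝ h x v ^ 2 +
        deriv φ (h x) * iteratedFDeriv ℝ 2 h x ![v, v] := by
  have hderiv : deriv (fun t : ℝ ↦ h (x + t • v)) 0 = fderiv ℝ h x v :=
    (hh.differentiableAt two_ne_zero).lineDeriv_eq_fderiv
  have hcomp := iteratedDeriv_comp_two (g := φ) (f := fun t : ℝ ↦ h (x + t • v)) (x := 0)
    (by simpa using hφ) (ContDiffAt.comp 0 (by simpa using hh) (by fun_prop))
  rw [hderiv, iteratedDeriv_two_comp_add_smul hh, zero_smul, add_zero] at hcomp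
  rw [← iteratedDeriv_two_comp_add_smul (hφ.comp x hh), ← hcomp]
  rfl

end SecondDerivative

section Laplacian

variable {E : Type*} [NormedAddCommGroup E] [InnerProductSpace ℝ E] [FiniteDimensional ℝ E]
  {f g : E → ℝ} {x : E}

lemma laplacian_nonpos_of_isLocalMax (hf : ContDiffAt ℝ 2 f x) (hmax : IsLocalMax f x) :
    Δ f x ≤ 0 := by
  simp only [laplacian_eq_iteratedFDeriv_stdOrthonormalBasis]
  refine Finset.sum_nonpos fun i _ ↦ ?_
  set v := stdOrthonormalBasis ℝ E i
  have hline : ContinuousAt (fun t : ℝ ↦ x + t • v) 0 := by fun_prop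
  have hzero : x = x + (0 : ℝ) • v := by simp
  rw [← iteratedDeriv_two_comp_add_smul hf]
  refine iteratedDeriv_two_nonpos_of_isLocalMax ?_ (IsLocalMax.comp_continuous (hzero ▸ hmax) hline)
  exact ContinuousAt.comp (hzero ▸ hf.continuousAt) hline

lemma laplacian_le_of_isLocalMax_sub (hf : ContDiffAt ℝ 2 f x) (hg : ContDiffAt ℝ 2 g x)
    (hmax : IsLocalMax (f - g) x) : Δ f x ≤ Δ g x := by
  have hsub : Δ (f - g) x ≤ 0 := laplacian_nonpos_of_isLocalMax (hf.sub hg) hmax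
  rwa [hf.laplacian_sub hg, sub_nonpos] at hsub

lemma laplacian_le_of_isLocalMax_div (hf : ContDiffAt ℝ 2 f x) (hg : ContDiffAt ℝ 2 g x)
    (hgx : 0 < g x) (hmax : IsLocalMax (f / g) x) : Δ f x ≤ f x / g x * Δ g x := by
  have htouch : IsLocalMax (f - (f x / g x) • g) x := by
    filter_upwards [hmax, hg.continuousAt.eventually_const_lt hgx] with y hy hgy
    have hfy : f y ≤ f x / g x * g y := (div_le_iff₀ hgy).1 hy
    simpa [hgx.ne'] using hfy
  have hle := laplacian_le_of_isLocalMax_sub hf (hg.const_smul (f x / g x)) htouch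
  rwa [← Pi.smul_def, laplacian_smul _ hg, smul_eq_mul] at hle

lemma laplacian_comp {φ : ℝ → ℝ} (hφ : ContDiffAt ℝ 2 φ (f x)) (hf : ContDiffAt ℝ 2 f x) :
    Δ (φ ∘ f) x = iteratedDeriv 2 φ (f x) * ‖∇ f x‖ ^ 2 + deriv φ (f x) * Δ f x := by
  have hgrad (v : E) : fderiv ℝ f x v ^ 2 = ‖⟪v, ∇ f x⟫‖ ^ 2 := by
    rw [inner_gradient_right, Real.norm_eq_abs, sq_abs]
    rfl
  simp only [laplacian_eq_iteratedFDeriv_stdOrthonormalBasis, iteratedFDeriv_two_comp hφ hf, hgrad,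
    Finset.sum_add_distrib, ← Finset.mul_sum, OrthonormalBasis.sum_sq_norm_inner_right]

lemma laplacian_sq (hf : ContDiffAt ℝ 2 f x) :
    Δ (f ^ 2) x = 2 * ‖∇ f x‖ ^ 2 + 2 * f x * Δ f x := by
  have hcomp : f ^ 2 = (fun t : ℝ ↦ t ^ 2) ∘ f := rfl
  have hderiv₂ : iteratedDeriv 2 (fun t : ℝ ↦ t ^ 2) (f x) = 2 := by
    simp
  rw [hcomp, laplacian_comp (by fun_prop) hf, hderiv₂]
  simp

lemma laplacian_inv (hf : ContDiffAt ℝ 2 f x) (hfx : f x ≠ 0) :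
    Δ f⁻¹ x = 2 * ‖∇ f x‖ ^ 2 / f x ^ 3 - Δ f x / f x ^ 2 := by
  have hcomp : f⁻¹ = Inv.inv ∘ f := rfl
  have hderiv₂ : iteratedDeriv 2 Inv.inv (f x) = 2 / f x ^ 3 := by
    rw [iteratedDeriv_eq_iterate, iter_deriv_inv]
    norm_num [zpow_neg, div_eq_mul_inv]
  rw [hcomp, laplacian_comp (contDiffAt_inv ℝ hfx) hf, hderiv₂, deriv_inv]
  ring

variable {η w : E → ℝ} {y : E}

lemma sq_mul_laplacian_le_of_isLocalMax_mul (hη : ContDiffAt ℝ 2 η y)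
    (hw : ContDiffAt ℝ 2 w y) (hpos : 0 < η y) (hmax : IsLocalMax (η * w) y) :
    η y ^ 2 * Δ w y ≤ (2 * ‖∇ η y‖ ^ 2 - η y * Δ η y) * w y := by
  have hdiv : η * w = w / η⁻¹ := by
    rw [div_inv_eq_mul, mul_comm]
  have hle := laplacian_le_of_isLocalMax_div hw (hη.inv hpos.ne') (inv_pos.2 hpos) (hdiv ▸ hmax)
  rw [laplacian_inv hη hpos.ne', Pi.inv_apply] at hle
  calc η y ^ 2 * Δ w y
      ≤ η y ^ 2 * (w y / (η y)⁻¹ * (2 * ‖∇ η y‖ ^ 2 / η y ^ 3 - Δ η y / η y ^ 2)) := by gcongr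
    _ = (2 * ‖∇ η y‖ ^ 2 - η y * Δ η y) * w y := by field_simp

lemma mul_le_sq_mul_laplacian_of_isLocalMax_sq_div (hη : ContDiffAt ℝ 2 η y)
    (hw : ContDiffAt ℝ 2 w y) (hpos : 0 < w y) (hmax : IsLocalMax (η ^ 2 / w) y) :
    (2 * ‖∇ η y‖ ^ 2 + 2 * η y * Δ η y) * w y ≤ η y ^ 2 * Δ w y := by
  have hle := laplacian_le_of_isLocalMax_div (f := η ^ 2) (hη.pow 2) hw hpos hmax
  rw [laplacian_sq hη, Pi.pow_apply, div_mul_eq_mul_div] at hle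
  exact (le_div_iff₀ hpos).1 hle

end Laplacian

section BallWeight

/-- The weight `η = R² - |· - x|²`, positive inside the ball of radius `R` about `x` and zero on its
boundary. It forces weighted maxima over the closed ball into the interior. -/
def ballWeight {E : Type*} [NormedAddCommGroup E] (x : E) (R : ℝ) (y : E) : ℝ :=
  R ^ 2 - ‖y - x‖ ^ 2

section Norm

variable {E : Type*} [NormedAddCommGroup E] (x : E) {y : E} {R : ℝ}

lemma ballWeight_self (R : ℝ) : ballWeight x R x = R ^ 2 := by
  simp [ballWeight]

lemma ballWeight_le_sq (y : E) (R : ℝ) : ballWeight x R y ≤ R ^ 2 :=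
  sub_le_self _ (sq_nonneg _)

lemma ballWeight_pos (hy : y ∈ ball x R) : 0 < ballWeight x R y :=
  sub_pos.2 (pow_lt_pow_left₀ (mem_ball_iff_norm.1 hy) (norm_nonneg _) two_ne_zero)

lemma ballWeight_eq_zero (hy : y ∈ sphere x R) : ballWeight x R y = 0 := by
  rw [ballWeight, mem_sphere_iff_norm.1 hy, sub_self]

end Norm

variable {E : Type*} [NormedAddCommGroup E] [InnerProductSpace ℝ E] (x y : E) (R : ℝ)

lemma contDiff_ballWeight {n : WithTop ℕ∞} : ContDiff ℝ n (ballWeight x R) :=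
  contDiff_const.sub ((contDiff_id.sub contDiff_const).norm_sq ℝ)

lemma fderiv_ballWeight :
    fderiv ℝ (ballWeight x R) = fun y ↦ (-2 : ℝ) • innerSL ℝ (y - x) := by
  funext y
  refine (((hasFDerivAt_id y).sub_const x).norm_sq.const_sub (R ^ 2)).fderiv.trans ?_
  ext v
  simp

lemma norm_gradient_ballWeight_sq [CompleteSpace E] :
    ‖∇ (ballWeight x R) y‖ ^ 2 = 4 * (R ^ 2 - ballWeight x R y) := by
  rw [gradient, LinearIsometryEquiv.norm_map, fderiv_ballWeight, norm_smul, innerSL_apply_norm,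
    mul_pow, ballWeight]
  norm_num

lemma laplacian_ballWeight [FiniteDimensional ℝ E] :
    Δ (ballWeight x R) y = -2 * finrank ℝ E := by
  have hfderiv₂ (v : E) : fderiv ℝ (fderiv ℝ (ballWeight x R)) y v v = -2 * ‖v‖ ^ 2 := by
    have h := ((innerSL ℝ).hasFDerivAt.comp y ((hasFDerivAt_id y).sub_const x)).const_smul (-2 : ℝ)
    rw [fderiv_ballWeight, ← real_inner_self_eq_norm_sq]
    exact congrArg (fun L ↦ L v v) h.fderiv
  simp [laplacian_eq_iteratedFDeriv_stdOrthonormalBasis, iteratedFDeriv_two_apply, hfderiv₂,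
    mul_comm]

end BallWeight

lemma exists_isMaxOn_closedBall_mem_ball {X α : Type*} [PseudoMetricSpace X] [ProperSpace X]
    [LinearOrder α] [TopologicalSpace α] [ClosedIciTopology α] {f : X → α} {x : X} {R : ℝ}
    (hR : 0 ≤ R) (hf : ContinuousOn f (closedBall x R)) (hsphere : ∀ z ∈ sphere x R, f z < f x) :
    ∃ y ∈ ball x R, IsMaxOn f (closedBall x R) y :=
  (isCompact_closedBall x R).exists_isMaxOn_mem_subset hf (mem_closedBall_self hR)
    fun z hz ↦ hsphere z (by rwa [closedBall_sdiff_ball] at hz)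

section AllenCahn

variable {E : Type*} [NormedAddCommGroup E] [InnerProductSpace ℝ E] [FiniteDimensional ℝ E]
  {w : E → ℝ} {x : E} {R : ℝ}

lemma exists_ballWeight_mul_sq_le (hR : 0 < R) (hcont : ContinuousOn w (closedBall x R))
    (hdiff : ContDiffOn ℝ 2 w (ball x R)) (hx : 0 < w x)
    (hsub : ∀ y ∈ ball x R, w y ^ 3 - w y ≤ Δ w y) :
    ∃ y ∈ ball x R, R ^ 2 * w x ≤ ballWeight x R y * w y ∧
      (ballWeight x R y * w y) ^ 2 ≤ ballWeight x R y ^ 2 +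
        8 * (R ^ 2 - ballWeight x R y) + 2 * finrank ℝ E * ballWeight x R y := by
  set η := ballWeight x R
  have hη : ContDiff ℝ 2 η := contDiff_ballWeight x R
  have hηx : η x = R ^ 2 := ballWeight_self x R
  obtain ⟨y, hy, hmax⟩ := exists_isMaxOn_closedBall_mem_ball (f := η * w) hR.le
    (hη.continuous.continuousOn.mul hcont) fun z hz ↦ by
      have hηz : η z = 0 := ballWeight_eq_zero x hz
      rw [Pi.mul_apply, Pi.mul_apply, hηz, hηx, zero_mul]
      positivity
  have hηy : 0 < η y := ballWeight_pos x hy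
  have hcentre : R ^ 2 * w x ≤ η y * w y := hηx ▸ hmax (mem_closedBall_self hR.le)
  have hwy : 0 < w y := pos_of_mul_pos_right (lt_of_lt_of_le (by positivity) hcentre) hηy.le
  have hlap : η y ^ 2 * Δ w y ≤ (2 * ‖∇ η y‖ ^ 2 - η y * Δ η y) * w y :=
    sq_mul_laplacian_le_of_isLocalMax_mul hη.contDiffAt
      (hdiff.contDiffAt (isOpen_ball.mem_nhds hy)) hηy
      (hmax.isLocalMax (closedBall_mem_nhds_of_mem hy))
  rw [norm_gradient_ballWeight_sq, laplacian_ballWeight] at hlap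
  refine ⟨y, hy, hcentre, le_of_mul_le_mul_right ?_ hwy⟩
  linarith [mul_le_mul_of_nonneg_left (hsub y hy) (sq_nonneg (η y))]

lemma sq_le_of_cube_sub_self_le_laplacian (hR : 0 < R) (hcont : ContinuousOn w (closedBall x R))
    (hdiff : ContDiffOn ℝ 2 w (ball x R)) (hx : 0 < w x)
    (hsub : ∀ y ∈ ball x R, w y ^ 3 - w y ≤ Δ w y) :
    w x ^ 2 ≤ 1 + (8 + 2 * finrank ℝ E) / R ^ 2 := by
  obtain ⟨y, hy, hcentre, hle⟩ := exists_ballWeight_mul_sq_le hR hcont hdiff hx hsub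
  have hη : 0 < ballWeight x R y := ballWeight_pos x hy
  have hηR : ballWeight x R y ≤ R ^ 2 := ballWeight_le_sq x y R
  rw [← mul_le_mul_iff_right₀ (by positivity : 0 < (R ^ 2) ^ 2)]
  calc (R ^ 2) ^ 2 * w x ^ 2 = (R ^ 2 * w x) ^ 2 := by ring
    _ ≤ (ballWeight x R y * w y) ^ 2 := by gcongr
    _ ≤ ballWeight x R y ^ 2 + 8 * (R ^ 2 - ballWeight x R y) +
        2 * finrank ℝ E * ballWeight x R y := hle
    _ ≤ (R ^ 2) ^ 2 + 8 * (R ^ 2 - 0) + 2 * finrank ℝ E * R ^ 2 := by gcongr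
    _ = (R ^ 2) ^ 2 * (1 + (8 + 2 * finrank ℝ E) / R ^ 2) := by field_simp; ring

lemma exists_le_ballWeight_sq_mul (hR : 0 < R) (hcont : ContinuousOn w (closedBall x R))
    (hdiff : ContDiffOn ℝ 2 w (ball x R)) (hpos : ∀ y ∈ closedBall x R, 0 < w y)
    (hsuper : ∀ y ∈ ball x R, Δ w y ≤ w y ^ 3 - w y) :
    ∃ y ∈ ball x R, w y ≤ w x ∧
      8 * (R ^ 2 - ballWeight x R y) - 4 * finrank ℝ E * ballWeight x R y ≤
        ballWeight x R y ^ 2 * (w y ^ 2 - 1) := by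
  set η := ballWeight x R
  have hη : ContDiff ℝ 2 η := contDiff_ballWeight x R
  have hηx : η x = R ^ 2 := ballWeight_self x R
  have hwx : 0 < w x := hpos x (mem_closedBall_self hR.le)
  obtain ⟨y, hy, hmax⟩ := exists_isMaxOn_closedBall_mem_ball (f := η ^ 2 / w) hR.le
    ((hη.pow 2).continuous.continuousOn.div hcont fun y hy ↦ (hpos y hy).ne') fun z hz ↦ by
      have hηz : η z = 0 := ballWeight_eq_zero x hz
      rw [Pi.div_apply, Pi.div_apply, Pi.pow_apply, Pi.pow_apply, hηz, hηx,
        zero_pow two_ne_zero, zero_div]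
      positivity
  have hwy : 0 < w y := hpos y (ball_subset_closedBall hy)
  have hηy : 0 < η y := ballWeight_pos x hy
  have hle : w y ≤ w x := by
    have hcentre : (R ^ 2) ^ 2 / w x ≤ η y ^ 2 / w y := hηx ▸ hmax (mem_closedBall_self hR.le)
    have hηR : η y ≤ R ^ 2 := ballWeight_le_sq x y R
    refine (div_le_div_iff_of_pos_left (by positivity : 0 < (R ^ 2) ^ 2) hwx hwy).1 ?_
    exact hcentre.trans (by gcongr)
  have hlap : (2 * ‖∇ η y‖ ^ 2 + 2 * η y * Δ η y) * w y ≤ η y ^ 2 * Δ w y :=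
    mul_le_sq_mul_laplacian_of_isLocalMax_sq_div hη.contDiffAt
      (hdiff.contDiffAt (isOpen_ball.mem_nhds hy)) hwy
      (hmax.isLocalMax (closedBall_mem_nhds_of_mem hy))
  rw [norm_gradient_ballWeight_sq, laplacian_ballWeight] at hlap
  refine ⟨y, hy, hle, le_of_mul_le_mul_right ?_ hwy⟩
  linarith [mul_le_mul_of_nonneg_left (hsuper y hy) (sq_nonneg (η y))]

lemma one_sub_le_sq_of_laplacian_le_cube_sub_self (hR : 0 < R)
    (hcont : ContinuousOn w (closedBall x R)) (hdiff : ContDiffOn ℝ 2 w (ball x R))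
    (hpos : ∀ y ∈ closedBall x R, 0 < w y)
    (hsuper : ∀ y ∈ ball x R, Δ w y ≤ w y ^ 3 - w y) :
    1 - (finrank ℝ E + 2) ^ 2 / 2 / R ^ 2 ≤ w x ^ 2 := by
  obtain ⟨y, hy, hyx, hle⟩ := exists_le_ballWeight_sq_mul hR hcont hdiff hpos hsuper
  have hwy : 0 < w y := hpos y (ball_subset_closedBall hy)
  have hη : 0 < ballWeight x R y := ballWeight_pos x hy
  set η := ballWeight x R y
  -- `c = (n + 2)² / 2` makes `8 R⁴ - 4 (n + 2) R² η + c η²` half the square of `(n + 2) η - 4 R²`.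
  have hquad : 0 ≤ 8 * (R ^ 2 - η) - 4 * finrank ℝ E * η +
      η ^ 2 * ((finrank ℝ E + 2) ^ 2 / 2 / R ^ 2) := by
    calc 0 ≤ ((finrank ℝ E + 2) * η - 4 * R ^ 2) ^ 2 / (2 * R ^ 2) := by positivity
      _ = _ := by field_simp; ring
  have hwy_sq : 1 - (finrank ℝ E + 2) ^ 2 / 2 / R ^ 2 ≤ w y ^ 2 := by
    refine le_of_mul_le_mul_left ?_ (pow_pos hη 2)
    linarith
  exact hwy_sq.trans (by gcongr)

lemma le_one_of_cube_sub_self_le_laplacian (hw : ContDiff ℝ 2 w)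
    (hsub : ∀ y, w y ^ 3 - w y ≤ Δ w y) (x : E) : w x ≤ 1 := by
  rcases le_or_gt (w x) 0 with hx | hx
  · exact hx.trans zero_le_one
  have hlim : Tendsto (fun R : ℝ ↦ 1 + (8 + 2 * finrank ℝ E) / R ^ 2) atTop (𝓝 1) := by
    simpa using ((tendsto_pow_atTop two_ne_zero).const_div_atTop
      (8 + 2 * finrank ℝ E : ℝ)).const_add 1
  have hsq : w x ^ 2 ≤ 1 := by
    refine ge_of_tendsto hlim ((eventually_gt_atTop 0).mono fun R hR ↦ ?_)
    exact sq_le_of_cube_sub_self_le_laplacian hR hw.continuous.continuousOn hw.contDiffOn hx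
      fun y _ ↦ hsub y
  exact (sq_le_one_iff₀ hx.le).1 hsq

lemma one_le_of_laplacian_le_cube_sub_self (hw : ContDiff ℝ 2 w) (hpos : ∀ y, 0 < w y)
    (hsuper : ∀ y, Δ w y ≤ w y ^ 3 - w y) (x : E) : 1 ≤ w x := by
  have hlim : Tendsto (fun R : ℝ ↦ 1 - (finrank ℝ E + 2) ^ 2 / 2 / R ^ 2) atTop (𝓝 1) := by
    simpa using ((tendsto_pow_atTop two_ne_zero).const_div_atTop
      ((finrank ℝ E + 2) ^ 2 / 2 : ℝ)).const_sub 1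
  have hsq : 1 ≤ w x ^ 2 := by
    refine le_of_tendsto hlim ((eventually_gt_atTop 0).mono fun R hR ↦ ?_)
    exact one_sub_le_sq_of_laplacian_le_cube_sub_self hR hw.continuous.continuousOn hw.contDiffOn
      (fun y _ ↦ hpos y) fun y _ ↦ hsuper y
  exact (one_le_sq_iff₀ (hpos x).le).1 hsq

theorem eq_one_of_laplacian_eq_cube_sub_self (hw : ContDiff ℝ 2 w) (hpos : ∀ y, 0 < w y)
    (heq : ∀ y, Δ w y = w y ^ 3 - w y) (x : E) : w x = 1 :=
  le_antisymm (le_one_of_cube_sub_self_le_laplacian hw (fun y ↦ (heq y).ge) x)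
    (one_le_of_laplacian_le_cube_sub_self hw hpos (fun y ↦ (heq y).le) x)

end AllenCahn

section System

lemma lap_eq_laplacian {n : ℕ} {f : EuclideanSpace ℝ (Fin n) → ℝ} {x : EuclideanSpace ℝ (Fin n)}
    (hf : ContDiffAt ℝ 2 f x) : lap n f x = Δ f x := by
  have hfderiv : DifferentiableAt ℝ (fderiv ℝ f) x :=
    (hf.fderiv_right le_rfl).differentiableAt one_ne_zero
  simp [lap, laplacian_eq_iteratedFDeriv_orthonormalBasis f (EuclideanSpace.basisFun (Fin n) ℝ),
    iteratedFDeriv_two_apply, fderiv_clm_apply hfderiv (differentiableAt_const _)]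

variable {n : ℕ} {u v : EuclideanSpace ℝ (Fin n) → ℝ}

lemma IsSolution.laplacian_add_eq_cube_sub_self (hsol : IsSolution n 3 u v)
    (x : EuclideanSpace ℝ (Fin n)) :
    Δ (u + v) x = (u + v) x ^ 3 - (u + v) x := by
  obtain ⟨hu, hv, hueq, hveq⟩ := hsol
  rw [hu.contDiffAt.laplacian_add hv.contDiffAt, ← lap_eq_laplacian hu.contDiffAt,
    ← lap_eq_laplacian hv.contDiffAt, Pi.add_apply]
  linarith [hueq x, hveq x]

lemma IsSolution.add_eq_one (hsol : IsSolution n 3 u v) (hpos : ∀ x, 0 < u x + v x)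
    (x : EuclideanSpace ℝ (Fin n)) : u x + v x = 1 :=
  eq_one_of_laplacian_eq_cube_sub_self (hsol.1.add hsol.2.1) hpos
    hsol.laplacian_add_eq_cube_sub_self x

lemma IsSolution.fderiv_eq_neg (hsol : IsSolution n 3 u v) (hpos : ∀ x, 0 < u x + v x)
    (x : EuclideanSpace ℝ (Fin n)) : fderiv ℝ v x = -fderiv ℝ u x := by
  have hv : v = fun y ↦ 1 - u y := funext fun y ↦ eq_sub_of_add_eq' (hsol.add_eq_one hpos y)
  rw [hv, fderiv_const_sub]

theorem stmt_9_general (hsol : IsSolution n 3 u v) (hpos : ∀ x, 0 < u x + v x)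
    (x e : EuclideanSpace ℝ (Fin n)) : 0 < fderiv ℝ u x e ↔ fderiv ℝ v x e < 0 := by
  rw [hsol.fderiv_eq_neg hpos, neg_apply, neg_lt_zero]

end System

/-- Theorem 1.9 (i): for `Λ = 3` and positive solutions,
`∂_N u > 0` everywhere iff `∂_N v < 0` everywhere. -/
theorem stmt_9 (N : ℕ)
    (u v : EuclideanSpace ℝ (Fin (N + 1)) → ℝ)
    (hsol : IsSolution (N + 1) 3 u v)
    (hu : ∀ x, 0 < u x) (hv : ∀ x, 0 < v x) :
    (∀ x, 0 < fderiv ℝ u x (EuclideanSpace.single (Fin.last N) 1)) ↔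
    (∀ x, fderiv ℝ v x (EuclideanSpace.single (Fin.last N) 1) < 0) :=
  forall_congr' fun x ↦ stmt_9_general hsol (fun y ↦ add_pos (hu y) (hv y)) x _
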